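/- Suppose the pair (G, A) is geodesically stackable, with stacking map Φ all of whose values have length at most M. Then for every n ∈ ℕ and all g, h ∈ G with ℓ(g) = ℓ(h) = n and ℓ(g⁻¹h) = 1, there is a word w of length at most M with π(w) = g⁻¹h whose path from g lies in the ball of radius n. -/

import Mathlib

namespace Stk

variable {G : Type*} [Group G] {A : Type*}

/-- Evaluation of a word over the generating alphabet in the group. -/
def eval (ρ : A → G) (w : List A) : G := (w.map ρ).prod

/-- `C` is a set of normal forms: evaluation restricted to `C` is a bijection onto `G`. -/
def IsNormalFormSet (ρ : A → G) (C : Set (List A)) : Prop :=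
  ∀ g : G, ∃! w : List A, w ∈ C ∧ eval ρ w = g

/-- The directed edge `(g, a)` of the Cayley graph is degenerate with respect to `C`. -/
def IsDegenerate (ρ : A → G) (ι : A → A) (C : Set (List A)) (e : G × A) : Prop :=
  ∃ y₁ y₂ : List A, y₁ ∈ C ∧ eval ρ y₁ = e.1 ∧ y₂ ∈ C ∧ eval ρ y₂ = e.1 * ρ e.2 ∧
    (y₁ ++ [e.2] = y₂ ∨ y₁ = y₂ ++ [ι e.2])

/-- A non-degenerate edge is recursive. -/
def IsRecursive (ρ : A → G) (ι : A → A) (C : Set (List A)) (e : G × A) : Prop :=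
  ¬ IsDegenerate ρ ι C e

/-- `e` is one of the edges along the path starting at `g` labeled by the word `w`. -/
def EdgeOnPath (ρ : A → G) (g : G) (w : List A) (e : G × A) : Prop :=
  ∃ i : Fin w.length, e = (g * eval ρ (w.take i), w.get i)

/-- A stackable structure for `(G, A)`: a normal form set `C` containing the empty word,
a well-founded strict partial order `lt` on the recursive edges, and a constant `k`,
such that each edge `(g, a)` admits a word of length at most `k` evaluating to `ρ a`,
each of whose edges along the path from `g` is degenerate or recursive and `lt`-below
`(g, a)`. -/
def IsStackableStructure (ρ : A → G) (ι : A → A) (C : Set (List A))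
    (lt : G × A → G × A → Prop) (k : ℕ) : Prop :=
  ([] : List A) ∈ C ∧ IsNormalFormSet ρ C ∧
  (∀ e e' : G × A, lt e e' → IsRecursive ρ ι C e ∧ IsRecursive ρ ι C e') ∧
  Transitive lt ∧ WellFounded lt ∧
  ∀ g : G, ∀ a : A, ∃ w : List A, w.length ≤ k ∧ eval ρ w = ρ a ∧
    ∀ e' : G × A, EdgeOnPath ρ g w e' → IsDegenerate ρ ι C e' ∨ lt e' (g, a)

/-- The pair `(G, A)` is stackable. -/
def IsStackable (ρ : A → G) (ι : A → A) : Prop :=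
  ∃ (C : Set (List A)) (lt : G × A → G × A → Prop) (k : ℕ),
    IsStackableStructure ρ ι C lt k

/-- A stacking map for a stackable structure. -/
def IsStackingMap (ρ : A → G) (ι : A → A) (C : Set (List A))
    (lt : G × A → G × A → Prop) (k : ℕ) (Φ : G × A → List A) : Prop :=
  ∀ e : G × A, IsRecursive ρ ι C e →
    eval ρ (Φ e) = ρ e.2 ∧ (Φ e).length ≤ k ∧
    ∀ e' : G × A, EdgeOnPath ρ e.1 (Φ e) e' → IsDegenerate ρ ι C e' ∨ lt e' e

/-- A stacking map extended by `Φ (g, a) = [a]` on degenerate edges. -/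
def IsExtendedStackingMap (ρ : A → G) (ι : A → A) (C : Set (List A))
    (lt : G × A → G × A → Prop) (k : ℕ) (Φ : G × A → List A) : Prop :=
  (∀ e : G × A, IsDegenerate ρ ι C e → Φ e = [e.2]) ∧ IsStackingMap ρ ι C lt k Φ

/-- A word is freely reduced if no letter is followed by its formal inverse. -/
def FreelyReduced (ι : A → A) (w : List A) : Prop :=
  List.Chain' (fun a b => b ≠ ι a) w


/-- Word length of a group element with respect to the generating set. -/
noncomputable def wlen (ρ : A → G) (g : G) : ℕ :=
  sInf {n : ℕ | ∃ w : List A, w.length = n ∧ eval ρ w = g}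

/-- The path starting at `g` labeled by `w` lies in the ball of radius `n`: all vertices
are within distance `n` of the identity, and no edge has both endpoints at distance
exactly `n`. -/
def PathInBall (ρ : A → G) (g : G) (w : List A) (n : ℕ) : Prop :=
  (∀ p : List A, p <+: w → wlen ρ (g * eval ρ p) ≤ n) ∧
  ∀ (p : List A) (a : A), p ++ [a] <+: w →
    ¬ (wlen ρ (g * eval ρ p) = n ∧ wlen ρ (g * eval ρ (p ++ [a])) = n)

/-- `(G, A)` is almost convex. -/
def IsAlmostConvex (ρ : A → G) : Prop :=
  ∃ k : ℕ, ∀ (n : ℕ) (g h : G), wlen ρ g = n → wlen ρ h = n →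
    wlen ρ (g⁻¹ * h) ≤ 2 →
    ∃ w : List A, w.length ≤ k ∧ eval ρ w = g⁻¹ * h ∧ PathInBall ρ g w n

/-- The average distance to the identity of the endpoints of an edge. -/
noncomputable def edgeDist (ρ : A → G) (e : G × A) : ℚ :=
  ((wlen ρ e.1 : ℚ) + (wlen ρ (e.1 * ρ e.2) : ℚ)) / 2

/-- The basic relation whose transitive closure is `<_Φ`: `e'` precedes `e` if both are
recursive and `e'` lies along the path of `Φ e`. -/
def FlowPrec (ρ : A → G) (ι : A → A) (C : Set (List A)) (Φ : G × A → List A)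
    (e' e : G × A) : Prop :=
  IsRecursive ρ ι C e ∧ IsRecursive ρ ι C e' ∧ EdgeOnPath ρ e.1 (Φ e) e'

/-- `(G, A)` is geodesically stackable: stackable with geodesic normal forms and a
stacking map compatible with distance to the identity. -/
def IsGeodesicallyStackable (ρ : A → G) (ι : A → A) : Prop :=
  ∃ (C : Set (List A)) (lt : G × A → G × A → Prop) (k : ℕ) (Φ : G × A → List A),
    IsStackableStructure ρ ι C lt k ∧ IsStackingMap ρ ι C lt k Φ ∧
    (∀ w ∈ C, w.length = wlen ρ (eval ρ w)) ∧
    ∀ e' e : G × A, Relation.TransGen (FlowPrec ρ ι C Φ) e' e →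
      edgeDist ρ e' < edgeDist ρ e

/-- Every edge of the path is degenerate or has average level below `n`. -/
def Good (ρ : A → G) (ι : A → A) (C : Set (List A)) (g : G) (n : ℕ) (w : List A) : Prop :=
  ∀ (p : List A) (b : A) (s : List A), w = p ++ b :: s →
    IsDegenerate ρ ι C (g * eval ρ p, b) ∨ edgeDist ρ (g * eval ρ p, b) < n

theorem eval_append (ρ : A → G) (u v : List A) : eval ρ (u ++ v) = eval ρ u * eval ρ v := by
  simp [eval]

theorem eval_single (ρ : A → G) (a : A) : eval ρ [a] = ρ a := by
  simp [eval]

theorem wlen_le (ρ : A → G) (w : List A) : wlen ρ (eval ρ w) ≤ w.length :=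
  Nat.sInf_le ⟨w, rfl, rfl⟩

theorem wlen_step (ρ : A → G) (C : Set (List A)) (hC : IsNormalFormSet ρ C)
    (hgeo : ∀ w ∈ C, w.length = wlen ρ (eval ρ w)) (g : G) (a : A) :
    wlen ρ (g * ρ a) ≤ wlen ρ g + 1 := by
  obtain ⟨y, ⟨hy, rfl⟩, -⟩ := hC g
  have h := wlen_le ρ (y ++ [a])
  rw [eval_append, eval_single, List.length_append, hgeo y hy] at h
  simpa using h

theorem good_cut (ρ : A → G) (ι : A → A) (C : Set (List A)) (g : G) (n : ℕ)
    (p : List A) (a b : A) (s : List A) (hab : ρ a * ρ b = 1)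
    (h : Good ρ ι C g n (p ++ a :: b :: s)) : Good ρ ι C g n (p ++ s) := by
  intro p' c s' he
  rcases List.append_eq_append_iff.1 he with ⟨t, h1, h2⟩ | ⟨t, h1, h2⟩
  · have := h (p ++ a :: b :: t) c s' (by simp [h2])
    have e : eval ρ (p ++ a :: b :: t) = eval ρ p' := by
      rw [h1]; simp [eval, ← mul_assoc]; simp [mul_assoc, hab]
    rwa [e] at this
  · cases t with
    | nil =>
      simp at h1 h2
      have := h (p ++ [a, b]) c s' (by simp [← h2])
      have e : eval ρ (p ++ [a, b]) = eval ρ p' := by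
        rw [h1]; simp [eval, hab]
      rwa [e] at this
    | cons d t =>
      simp at h2
      obtain ⟨rfl, rfl⟩ := h2
      exact h p' c (t ++ a :: b :: s) (by simp [h1])

/-- in a geodesically stackable pair with stacking map bounded by `M`,
adjacent elements of a sphere of radius `n` are joined by a path of length at most `M`
inside the ball of radius `n`. -/
theorem path_in_ball_of_geodesically_stackable {G : Type*} [Group G] {A : Type*}
    [Fintype A]
    (ρ : A → G) (ι : A → A)
    (hgen : Subgroup.closure (Set.range ρ) = ⊤)
    (hne : ∀ a : A, ρ a ≠ 1)
    (hinv : Function.Involutive ι)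
    (hρι : ∀ a : A, ρ (ι a) = (ρ a)⁻¹)
    (C : Set (List A)) (lt : G × A → G × A → Prop) (k : ℕ) (Φ : G × A → List A) (M : ℕ)
    (hstk : IsStackableStructure ρ ι C lt k)
    (hΦ : IsStackingMap ρ ι C lt k Φ)
    (hgeo : ∀ w ∈ C, w.length = wlen ρ (eval ρ w))
    (hα : ∀ e' e : G × A, Relation.TransGen (FlowPrec ρ ι C Φ) e' e →
      edgeDist ρ e' < edgeDist ρ e)
    (hM : ∀ e : G × A, IsRecursive ρ ι C e → (Φ e).length ≤ M) :
    ∀ (n : ℕ) (g h : G), wlen ρ g = n → wlen ρ h = n → wlen ρ (g⁻¹ * h) = 1 →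
      ∃ w : List A, w.length ≤ M ∧ eval ρ w = g⁻¹ * h ∧ PathInBall ρ g w n := by
  intro n g h hg hh hgh
  have hC := hstk.2.1
  have step := wlen_step ρ C hC hgeo
  have step' : ∀ (x : G) (a : A), wlen ρ x ≤ wlen ρ (x * ρ a) + 1 := by
    intro x a
    have := step (x * ρ a) (ι a)
    rwa [hρι, mul_inv_cancel_right] at this
  -- levels of a degenerate edge
  have hdeg : ∀ (x : G) (a : A), IsDegenerate ρ ι C (x, a) →
      (∃ y ∈ C, eval ρ y = x ∧ y ++ [a] ∈ C ∧ wlen ρ (x * ρ a) = wlen ρ x + 1) ∨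
      (∃ y ∈ C, eval ρ y = x * ρ a ∧ y ++ [ι a] ∈ C ∧ wlen ρ x = wlen ρ (x * ρ a) + 1) := by
    rintro x a ⟨y₁, y₂, h1, e1, h2, e2, hh⟩
    have l1 := hgeo _ h1
    have l2 := hgeo _ h2
    rw [e1] at l1
    rw [e2] at l2
    dsimp only at *
    rcases hh with hh | hh
    · left
      refine ⟨y₁, h1, e1, hh ▸ h2, ?_⟩
      rw [← l1, ← l2, ← hh]; simp
    · right
      refine ⟨y₂, h2, e2, hh ▸ h1, ?_⟩
      rw [← l1, ← l2, hh]; simp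
  obtain ⟨u, hu1, hu2⟩ : (1 : ℕ) ∈ {n : ℕ | ∃ w : List A, w.length = n ∧ eval ρ w = g⁻¹ * h} := by
    have : wlen ρ (g⁻¹ * h) ∈ {n : ℕ | ∃ w : List A, w.length = n ∧ eval ρ w = g⁻¹ * h} := by
      apply Nat.sInf_mem
      obtain ⟨y, ⟨-, hy⟩, -⟩ := hC (g⁻¹ * h)
      exact ⟨_, y, rfl, hy⟩
    rwa [hgh] at this
  obtain ⟨a, rfl⟩ := List.length_eq_one_iff.1 hu1
  rw [eval_single] at hu2
  have hga : g * ρ a = h := by rw [hu2]; group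
  have hrec : IsRecursive ρ ι C (g, a) := by
    intro hd
    rcases hdeg _ _ hd with ⟨y, -, -, -, hl⟩ | ⟨y, -, -, -, hl⟩ <;> rw [hga] at hl <;> omega
  have hdist : edgeDist ρ (g, a) = n := by
    simp only [edgeDist, hga, hg, hh]; ring
  obtain ⟨hev, -, hed⟩ := hΦ _ hrec
  have hgood : Good ρ ι C g n (Φ (g, a)) := by
    intro p b s hw
    by_cases hd : IsDegenerate ρ ι C (g * eval ρ p, b)
    · exact Or.inl hd
    · right
      rw [← hdist]
      refine hα _ _ (Relation.TransGen.single ⟨hrec, hd, ⟨⟨p.length, by simp [hw]⟩, ?_⟩⟩)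
      simp [hw]
  -- choose a shortest good word
  let S : Set (List A) := {w | eval ρ w = ρ a ∧ Good ρ ι C g n w ∧ w.length ≤ M}
  have hS : S.Nonempty := ⟨Φ (g, a), hev, hgood, hM _ hrec⟩
  obtain ⟨w, ⟨hw1, hw2, hw3⟩, hmin⟩ :=
    WellFounded.has_min (InvImage.wf (List.length (α := A)) Nat.lt_wfRel.wf) S hS
  have hle : ∀ p : List A, p <+: w → wlen ρ (g * eval ρ p) ≤ n := by
    obtain ⟨i, hi, hmax⟩ := Finset.exists_max_image (Finset.range (w.length + 1))
      (fun i => wlen ρ (g * eval ρ (w.take i))) ⟨0, by simp⟩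
    have hmax' : ∀ q : List A, q <+: w →
        wlen ρ (g * eval ρ q) ≤ wlen ρ (g * eval ρ (w.take i)) := by
      intro q hq
      have h1 := hmax q.length (by have := hq.length_le; simp; omega)
      rwa [← List.prefix_iff_eq_take.1 hq] at h1
    intro q hq
    refine (hmax' q hq).trans ?_
    by_contra! hlt
    obtain ⟨s, hs⟩ := List.take_prefix i w
    generalize w.take i = p at *
    rcases List.eq_nil_or_concat p with rfl | ⟨p, c, rfl⟩
    · simp [eval, hg] at hlt
    cases s with
    | nil =>
      simp only [List.append_nil] at hs
      rw [hs, hw1, hga, hh] at hlt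
      omega
    | cons b s =>
      subst hs
      have m1 := hmax' p ⟨[c] ++ b :: s, by simp⟩
      have m2 := hmax' (p ++ [c] ++ [b]) ⟨s, by simp⟩
      have g1 := hw2 p c (b :: s) (by simp)
      have g2 := hw2 (p ++ [c]) b s (by simp)
      have ec : g * eval ρ (p ++ [c]) = g * eval ρ p * ρ c := by
        rw [eval_append, eval_single, mul_assoc]
      have eb : g * eval ρ (p ++ [c] ++ [b]) = g * eval ρ (p ++ [c]) * ρ b := by
        rw [eval_append _ (p ++ [c]), eval_single, mul_assoc]
      have s1 := step (g * eval ρ p) c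
      have s2 := step' (g * eval ρ (p ++ [c])) b
      simp only [List.concat_eq_append] at *
      rw [← ec] at s1
      rw [eb] at m2
      have d1 : IsDegenerate ρ ι C (g * eval ρ p, c) := by
        refine g1.resolve_right ?_
        simp only [edgeDist, ← ec, not_lt]
        rw [le_div_iff₀ (by norm_num)]
        norm_cast
        omega
      have d2 : IsDegenerate ρ ι C (g * eval ρ (p ++ [c]), b) := by
        refine g2.resolve_right ?_
        simp only [edgeDist, not_lt]
        rw [le_div_iff₀ (by norm_num)]
        norm_cast
        omega
      rcases hdeg _ _ d1 with ⟨y, hy, ey, hyc, hl1⟩ | ⟨y, -, -, -, hl1⟩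
      swap
      · rw [← ec] at hl1; omega
      rcases hdeg _ _ d2 with ⟨z, -, -, -, hl2⟩ | ⟨z, hz, ez, hzc, hl2⟩
      · omega
      have e1 : eval ρ (y ++ [c]) = g * eval ρ (p ++ [c]) := by
        rw [eval_append, eval_single, ey, ec]
      have e2 : eval ρ (z ++ [ι b]) = g * eval ρ (p ++ [c]) := by
        rw [eval_append, eval_single, ez, hρι, mul_inv_cancel_right]
      have heq := (hC _).unique ⟨hyc, e1⟩ ⟨hzc, e2⟩
      have hcb : c = ι b := by simpa using (List.append_inj' heq rfl).2
      have hone : ρ c * ρ b = 1 := by rw [hcb, hρι, inv_mul_cancel]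
      have hw2' : Good ρ ι C g n (p ++ c :: b :: s) := by simpa using hw2
      refine hmin (p ++ s) ⟨?_, good_cut ρ ι C g n p c b s hone hw2', ?_⟩ ?_
      · rw [← hw1]
        simp only [eval, List.map_append, List.prod_append, List.map_cons, List.prod_cons,
          List.map_nil, List.prod_nil, mul_one]
        rw [← mul_assoc, mul_assoc _ (ρ c), hone, mul_one]
      · simp at hw3 ⊢; omega
      · simp [InvImage, WellFoundedRelation.rel]
  refine ⟨w, hw3, by rw [hw1, hu2], hle, ?_⟩
  rintro p b ⟨s, hs⟩ ⟨h1, h2⟩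
  rw [eval_append, eval_single, ← mul_assoc] at h2
  rcases hw2 p b s (by simp [← hs]) with hd | hd
  · rcases hdeg _ _ hd with ⟨y, -, -, -, hl⟩ | ⟨y, -, -, -, hl⟩ <;> omega
  · simp only [edgeDist, h1, h2] at hd
    linarith

end Stk
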